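/- Let E be a quiver whose vertex set is downward directed and in which no cycle has an exit, and suppose the vertex v lies on some cycle of E. Then every vertex u of E satisfies u ≥ v (there is a path from u to v). -/

import Mathlib

/-!
A cycle without exits is a trap: the edges leaving its vertices are exactly the edges of the cycle,
so every path starting on the cycle stays on it (`mem_vertsList_of_path`). Given `x`, downward
directedness yields a common descendant `w` of `x` and `v`. As `v` lies on the cycle, so does `w`,
and going around the cycle leads from `w` back to `v`. Hence `x ≥ w ≥ v`.
-/

namespace QuiverAux

variable {V : Type*} [Quiver V]

/-- The list of vertices visited by a path: its starting vertex followed by the targets of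
its successive edges. -/
def vertsList {a : V} : {b : V} → Quiver.Path a b → List V
  | _, Quiver.Path.nil => [a]
  | b, Quiver.Path.cons p _ => vertsList p ++ [b]

/-- The list of edges of a path, as a list of sigma-bundled edges. -/
def edgeList {a : V} : {b : V} → Quiver.Path a b → List (Σ x : V, Σ y : V, x ⟶ y)
  | _, Quiver.Path.nil => []
  | _, @Quiver.Path.cons _ _ _ c b p e => edgeList p ++ [⟨c, b, e⟩]

/-- A cycle is a path of positive length from a vertex back to itself that does not pass
through any vertex twice: the sources of its edges (equivalently, all visited vertices
except the final return to the base) are pairwise distinct. -/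
def IsCycle {v : V} (c : Quiver.Path v v) : Prop :=
  0 < c.length ∧ (vertsList c).dropLast.Nodup

/-- An exit for a path `c = e₁e₂⋯eₙ` is an edge `f` whose source equals the source of some
`eᵢ` but which is different (as a bundled edge) from `eᵢ`. -/
def HasExit {v : V} (c : Quiver.Path v v) : Prop :=
  ∃ (x y : V) (f : x ⟶ y), ∃ e ∈ edgeList c,
    e.1 = x ∧ (⟨x, y, f⟩ : Σ x : V, Σ y : V, x ⟶ y) ≠ e

/-- A vertex is a sink if no edge starts at it. -/
def IsSink (u : V) : Prop := ∀ w : V, IsEmpty (u ⟶ w)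

end QuiverAux

open QuiverAux

namespace QuiverAux

variable {V : Type*} [Quiver V]

lemma nonempty_path_to_mem {a b x : V} (p : Quiver.Path a b) (hx : x ∈ vertsList p) :
    Nonempty (Quiver.Path a x) := by
  induction p with
  | nil =>
    obtain rfl : x = a := by simpa [vertsList] using hx
    exact ⟨.nil⟩
  | cons p e ih =>
    rcases List.mem_append.1 hx with h | h
    · exact ih h
    · obtain rfl := List.mem_singleton.1 h
      exact ⟨p.cons e⟩

lemma nonempty_path_from_mem {a b x : V} (p : Quiver.Path a b) (hx : x ∈ vertsList p) :
    Nonempty (Quiver.Path x b) := by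
  induction p with
  | nil =>
    obtain rfl : x = a := by simpa [vertsList] using hx
    exact ⟨.nil⟩
  | cons p e ih =>
    rcases List.mem_append.1 hx with h | h
    · exact (ih h).map fun q => q.cons e
    · obtain rfl := List.mem_singleton.1 h
      exact ⟨.nil⟩

lemma target_mem_vertsList {a b : V} (p : Quiver.Path a b) (e : Σ x : V, Σ y : V, x ⟶ y)
    (he : e ∈ edgeList p) : e.2.1 ∈ vertsList p := by
  induction p with
  | nil => simp [edgeList] at he
  | cons p f ih =>
    rcases List.mem_append.1 he with h | h
    · exact List.mem_append_left _ (ih h)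
    · obtain rfl := List.mem_singleton.1 h
      simp [vertsList]

lemma eq_end_or_exists_source {a b x : V} (p : Quiver.Path a b) (hx : x ∈ vertsList p) :
    x = b ∨ ∃ e ∈ edgeList p, e.1 = x := by
  induction p with
  | nil => exact Or.inl (by simpa [vertsList] using hx)
  | @cons b c p f ih =>
    rcases List.mem_append.1 hx with h | h
    · right
      rcases ih h with rfl | ⟨e, he, hex⟩
      · exact ⟨⟨x, c, f⟩, by simp [edgeList], rfl⟩
      · exact ⟨e, List.mem_append_left _ he, hex⟩
    · exact Or.inl (List.mem_singleton.1 h)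

lemma exists_source_eq_start {a b : V} (p : Quiver.Path a b) (hp : 0 < p.length) :
    ∃ e ∈ edgeList p, e.1 = a := by
  induction p with
  | nil => simp at hp
  | @cons b c p f ih =>
    rcases Nat.eq_zero_or_pos p.length with h | h
    · obtain rfl := p.eq_of_length_zero h
      exact ⟨⟨a, c, f⟩, by simp [edgeList], rfl⟩
    · obtain ⟨e, he, hea⟩ := ih h
      exact ⟨e, List.mem_append_left _ he, hea⟩

/-- Paths starting on a closed path of positive length without exits never leave it. -/
lemma mem_vertsList_of_path {u : V} (c : Quiver.Path u u) (hc : 0 < c.length) (hex : ¬ HasExit c)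
    {x y : V} (hx : x ∈ vertsList c) (p : Quiver.Path x y) : y ∈ vertsList c := by
  induction p with
  | nil => exact hx
  | @cons y z p f ih =>
    obtain ⟨e, he, hey⟩ : ∃ e ∈ edgeList c, e.1 = y := by
      rcases eq_end_or_exists_source c ih with rfl | h
      · exact exists_source_eq_start c hc
      · exact h
    by_cases hfe : (⟨y, z, f⟩ : Σ x : V, Σ y : V, x ⟶ y) = e
    · subst hfe
      exact target_mem_vertsList c _ he
    · exact absurd ⟨y, z, f, e, he, hey, hfe⟩ hex

end QuiverAux

open QuiverAux

/-- In a quiver whose vertex set is downward directed and in which no cycle has an exit,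
if a vertex `v` lies on some cycle then every vertex has a path to `v`. -/
theorem stmt11 {V : Type*} [Quiver V]
    (hdd : ∀ u v : V, ∃ w : V, Nonempty (Quiver.Path u w) ∧ Nonempty (Quiver.Path v w))
    (hnoexit : ∀ (v : V) (c : Quiver.Path v v), IsCycle c → ¬ HasExit c)
    (v : V) (hv : ∃ (u : V) (c : Quiver.Path u u), IsCycle c ∧ v ∈ vertsList c) :
    ∀ u : V, Nonempty (Quiver.Path u v) := by
  obtain ⟨u, c, hc, hvc⟩ := hv
  intro x
  obtain ⟨w, ⟨p⟩, ⟨q⟩⟩ := hdd x v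
  have hw := mem_vertsList_of_path c hc.1 (hnoexit u c hc) hvc q
  obtain ⟨r⟩ := nonempty_path_from_mem c hw
  obtain ⟨t⟩ := nonempty_path_to_mem c hvc
  exact ⟨p.comp (r.comp t)⟩
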